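/- Let μ be twice continuously differentiable on [0,1] with μ(α) ≥ ρ for all α ∈ [0,1] for some ρ > 0 (in particular μ(0) ≠ 0). Let Z be the fundamental solution of the one-dimensional ultraslow diffusion equation, characterized by its Laplace transform in t, and assume Z is jointly measurable with x ↦ x² Z(t,x) integrable on ℝ for each t > 0. Then the mean square displacement m(t) = ∫_ℝ x² Z(t,x) dx satisfies m(t) ∼ C log t as t → ∞ for some constant C > 0; that is, there exists C > 0 with lim_{t→∞} m(t)/log t = C. -/

import Mathlib

open MeasureTheory Filter Set

/-- `K(p) = ∫₀¹ p^{α-1} μ(α) dα` for real `p > 0`. -/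
noncomputable def Kreal (μ : ℝ → ℝ) (p : ℝ) : ℝ :=
  ∫ α in (0:ℝ)..1, p ^ (α - 1) * μ α

/-!
A function that is continuous at `t` and whose Laplace transform is completely monotone along the
positive integers is nonnegative at `t`: by the substitution `u = exp (-t)` this is the positivity
half of the Hausdorff moment problem, which Bernstein polynomials settle. As `p K(p)` is a Bernstein
sequence, this criterion applies to `Z`, to `Z(·, 0) - Z(·, x)`, to the mass that `Z` leaves outside
of a ball of radius `r`, whose Laplace transform is `exp (-r √(p K(p))) / p`, and to the increments
in time of that mass. So the tails are nondecreasing in `t` and, by a Chernoff bound, vanish as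
`r → ∞`. Hence `Z(t, ·)` is a probability density, and by the layer cake formula its second moment
`m` is nondecreasing in `t`.

By Tonelli the Laplace transform of `m` is `2 / (p · p K(p))`. Since `p ^ α * log (1 / p)` is an
approximate identity at `α = 0` as `p → 0⁺`, we have `p K(p) log (1 / p) → μ(0)`, and a Karamata
Tauberian theorem for monotone functions gives `m(t) / log t → 2 / μ(0)`.
-/

open scoped Topology

section CompletelyMonotone

/-- The alternating differences of the sequence `f` are nonnegative up to order `n`. This finite
order version of complete monotonicity carries the inductions on the order. -/
def CompletelyMonotoneUpTo : ℕ → (ℕ → ℝ) → Prop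
  | 0, f => ∀ k, 0 ≤ f k
  | n + 1, f => (∀ k, 0 ≤ f k) ∧ CompletelyMonotoneUpTo n fun k => f k - f (k + 1)

/-- Completely monotone sequences: all alternating differences `(-1)ⁿ Δⁿ f` are nonnegative. -/
def CompletelyMonotone (f : ℕ → ℝ) : Prop :=
  ∀ n, CompletelyMonotoneUpTo n f

namespace CompletelyMonotoneUpTo

variable {n : ℕ} {f g b : ℕ → ℝ}

lemma nonneg (h : CompletelyMonotoneUpTo n f) (k : ℕ) : 0 ≤ f k := by
  cases n with
  | zero => exact h k
  | succ n => exact h.1 k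

lemma of_succ (h : CompletelyMonotoneUpTo (n + 1) f) : CompletelyMonotoneUpTo n f := by
  induction n generalizing f with
  | zero => exact h.1
  | succ n ih => exact ⟨h.1, ih h.2⟩

lemma shift (h : CompletelyMonotoneUpTo n f) : CompletelyMonotoneUpTo n fun k => f (k + 1) := by
  induction n generalizing f with
  | zero => exact fun k => h (k + 1)
  | succ n ih => exact ⟨fun k => h.1 (k + 1), ih h.2⟩

lemma const {c : ℝ} (hc : 0 ≤ c) : CompletelyMonotoneUpTo n fun _ => c := by
  induction n generalizing c with
  | zero => exact fun _ => hc
  | succ n ih => exact ⟨fun _ => hc, by simpa using ih le_rfl⟩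

lemma add (hf : CompletelyMonotoneUpTo n f) (hg : CompletelyMonotoneUpTo n g) :
    CompletelyMonotoneUpTo n fun k => f k + g k := by
  induction n generalizing f g with
  | zero => exact fun k => add_nonneg (hf k) (hg k)
  | succ n ih =>
    refine ⟨fun k => add_nonneg (hf.1 k) (hg.1 k), ?_⟩
    simpa only [add_sub_add_comm] using ih hf.2 hg.2

lemma mul (hf : CompletelyMonotoneUpTo n f) (hg : CompletelyMonotoneUpTo n g) :
    CompletelyMonotoneUpTo n fun k => f k * g k := by
  induction n generalizing f g with
  | zero => exact fun k => mul_nonneg (hf k) (hg k)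
  | succ n ih =>
    refine ⟨fun k => mul_nonneg (hf.1 k) (hg.1 k), ?_⟩
    have leibniz (k : ℕ) : f k * g k - f (k + 1) * g (k + 1) =
        (f k - f (k + 1)) * g k + f (k + 1) * (g k - g (k + 1)) := by ring
    simpa only [leibniz] using (ih hf.2 hg.of_succ).add (ih hf.of_succ.shift hg.2)

lemma of_tendsto {ι : Type*} {l : Filter ι} [l.NeBot] {F : ι → ℕ → ℝ}
    (hF : ∀ᶠ i in l, CompletelyMonotoneUpTo n (F i))
    (hl : ∀ k, Tendsto (fun i => F i k) l (𝓝 (f k))) : CompletelyMonotoneUpTo n f := by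
  have nonneg_limit (k : ℕ) : 0 ≤ f k :=
    ge_of_tendsto (hl k) (hF.mono fun i hi => hi.nonneg k)
  induction n generalizing F f with
  | zero => exact nonneg_limit
  | succ n ih =>
    have hsub (k : ℕ) := (hl k).sub (hl (k + 1))
    have hF_sub := hF.mono fun i hi => hi.2
    exact ⟨nonneg_limit, ih hF_sub hsub fun k =>
      ge_of_tendsto (hsub k) (hF_sub.mono fun i hi => hi.nonneg k)⟩

lemma integral {X : Type*} [MeasurableSpace X] {P : Measure X} {F : X → ℕ → ℝ}
    (hF : ∀ᵐ a ∂P, CompletelyMonotoneUpTo n (F a))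
    (hint : ∀ k, Integrable (fun a => F a k) P) :
    CompletelyMonotoneUpTo n fun k => ∫ a, F a k ∂P := by
  induction n generalizing F with
  | zero => exact fun k => integral_nonneg_of_ae (hF.mono fun a h => h k)
  | succ n ih =>
    refine ⟨fun k => integral_nonneg_of_ae (hF.mono fun a h => h.1 k), ?_⟩
    simpa only [integral_sub (hint _) (hint _)] using
      ih (hF.mono fun a h => h.2) fun k => (hint k).sub (hint (k + 1))

lemma inv (hb : ∀ k, 0 < b k) (h : CompletelyMonotoneUpTo n fun k => b (k + 1) - b k) :
    CompletelyMonotoneUpTo n fun k => (b k)⁻¹ := by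
  have inv_sub (k : ℕ) :
      (b k)⁻¹ - (b (k + 1))⁻¹ = (b (k + 1) - b k) * ((b k)⁻¹ * (b (k + 1))⁻¹) := by
    rw [inv_sub_inv (hb k).ne' (hb (k + 1)).ne', div_eq_mul_inv, mul_inv]
  induction n with
  | zero => exact fun k => (inv_pos.2 (hb k)).le
  | succ n ih =>
    refine ⟨fun k => (inv_pos.2 (hb k)).le, ?_⟩
    simp only [inv_sub]
    exact h.of_succ.mul ((ih h.of_succ).mul (ih h.of_succ).shift)

end CompletelyMonotoneUpTo

namespace CompletelyMonotone

variable {f g b : ℕ → ℝ}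

lemma nonneg (h : CompletelyMonotone f) (k : ℕ) : 0 ≤ f k :=
  h 0 k

lemma shift (h : CompletelyMonotone f) : CompletelyMonotone fun k => f (k + 1) :=
  fun n => (h n).shift

lemma const {c : ℝ} (hc : 0 ≤ c) : CompletelyMonotone fun _ => c :=
  fun _ => .const hc

lemma add (hf : CompletelyMonotone f) (hg : CompletelyMonotone g) :
    CompletelyMonotone fun k => f k + g k :=
  fun n => (hf n).add (hg n)

lemma mul (hf : CompletelyMonotone f) (hg : CompletelyMonotone g) :
    CompletelyMonotone fun k => f k * g k :=
  fun n => (hf n).mul (hg n)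

lemma const_mul (hf : CompletelyMonotone f) {c : ℝ} (hc : 0 ≤ c) :
    CompletelyMonotone fun k => c * f k :=
  (const hc).mul hf

lemma pow (hf : CompletelyMonotone f) (m : ℕ) : CompletelyMonotone fun k => f k ^ m := by
  induction m with
  | zero => simpa using const zero_le_one
  | succ m ih => simpa only [pow_succ] using ih.mul hf

lemma of_tendsto {ι : Type*} {l : Filter ι} [l.NeBot] {F : ι → ℕ → ℝ}
    (hF : ∀ᶠ i in l, CompletelyMonotone (F i))
    (hl : ∀ k, Tendsto (fun i => F i k) l (𝓝 (f k))) : CompletelyMonotone f :=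
  fun n => .of_tendsto (hF.mono fun _ hi => hi n) hl

lemma intervalIntegral {a c : ℝ} (hac : a ≤ c) {F : ℝ → ℕ → ℝ}
    (hF : ∀ ξ ∈ Icc a c, CompletelyMonotone (F ξ))
    (hcont : ∀ k, ContinuousOn (fun ξ => F ξ k) (Icc a c)) :
    CompletelyMonotone fun k => ∫ ξ in a..c, F ξ k := by
  intro n
  simp only [intervalIntegral.integral_of_le hac, ← integral_Icc_eq_integral_Ioc]
  refine .integral ?_ fun k => (hcont k).integrableOn_Icc
  filter_upwards [ae_restrict_mem measurableSet_Icc] with ξ hξ using hF ξ hξ n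

lemma inv (hb : ∀ k, 0 < b k) (h : CompletelyMonotone fun k => b (k + 1) - b k) :
    CompletelyMonotone fun k => (b k)⁻¹ :=
  fun n => CompletelyMonotoneUpTo.inv hb (h n)

lemma exp_neg (h : CompletelyMonotone fun k => b (k + 1) - b k) {c : ℝ} (hc : 0 ≤ c) :
    CompletelyMonotone fun k => Real.exp (-(c * b k)) := by
  have hmono : Monotone b := monotone_nat_of_le_succ fun k => sub_nonneg.1 (h.nonneg k)
  refine of_tendsto (l := atTop) (F := fun (m : ℕ) k => ((1 + c * b k / m)⁻¹) ^ m) ?_ fun k => ?_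
  · have hlim : Tendsto (fun m : ℕ => c * b 0 / (m : ℝ)) atTop (𝓝 0) :=
      tendsto_const_div_atTop_nhds_zero_nat _
    filter_upwards [hlim.eventually_const_lt neg_one_lt_zero] with m hm
    refine (inv (fun k => ?_) ?_).pow m
    · have : c * b 0 / m ≤ c * b k / m := by gcongr; exact hmono k.zero_le
      linarith
    · convert h.const_mul (div_nonneg hc m.cast_nonneg) using 2
      ring
  · simpa only [inv_pow, Real.exp_neg] using
      (Real.tendsto_one_add_div_pow_exp (c * b k)).inv₀ (Real.exp_pos _).ne'

end CompletelyMonotone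

/-- Bernstein sequences: positive sequences with completely monotone increments, the discrete
analogue of Bernstein functions. -/
structure IsBernstein (b : ℕ → ℝ) : Prop where
  pos : ∀ k, 0 < b k
  completelyMonotone_sub : CompletelyMonotone fun k => b (k + 1) - b k

lemma isBernstein_natCast_add_one : IsBernstein fun k => (k : ℝ) + 1 where
  pos _ := by positivity
  completelyMonotone_sub := by simpa using CompletelyMonotone.const zero_le_one

namespace IsBernstein

variable {b : ℕ → ℝ}

lemma inv (hb : IsBernstein b) : CompletelyMonotone fun k => (b k)⁻¹ :=
  .inv hb.pos hb.completelyMonotone_sub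

lemma exp_neg (hb : IsBernstein b) {c : ℝ} (hc : 0 ≤ c) :
    CompletelyMonotone fun k => Real.exp (-(c * b k)) :=
  hb.completelyMonotone_sub.exp_neg hc

lemma lineMap_succ (hb : IsBernstein b) {u : ℝ} (hu : u ∈ Icc (0 : ℝ) 1) :
    IsBernstein fun k => b k + u * (b (k + 1) - b k) where
  pos k := add_pos_of_pos_of_nonneg (hb.pos k)
    (mul_nonneg hu.1 (hb.completelyMonotone_sub.nonneg k))
  completelyMonotone_sub := by
    convert (hb.completelyMonotone_sub.const_mul (sub_nonneg.2 hu.2)).add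
      (hb.completelyMonotone_sub.shift.const_mul hu.1) using 2
    ring

lemma completelyMonotone_comp_sub (hb : IsBernstein b) {f f' : ℝ → ℝ}
    (hf : ∀ x > 0, HasDerivAt f (f' x) x) (hf' : ContinuousOn f' (Ioi 0))
    (h : ∀ c, IsBernstein c → CompletelyMonotone fun k => f' (c k)) :
    CompletelyMonotone fun k => f (b (k + 1)) - f (b k) := by
  have segment_pos {k : ℕ} {u : ℝ} (hu : u ∈ Icc (0 : ℝ) 1) : 0 < b k + u * (b (k + 1) - b k) :=
    (hb.lineMap_succ hu).pos k
  have hcont (k : ℕ) : ContinuousOn (fun u : ℝ => f' (b k + u * (b (k + 1) - b k))) (Icc 0 1) :=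
    hf'.comp (by fun_prop) fun u hu => segment_pos hu
  have integral_eq (k : ℕ) : f (b (k + 1)) - f (b k) =
      (b (k + 1) - b k) * ∫ u in (0 : ℝ)..1, f' (b k + u * (b (k + 1) - b k)) := by
    have := intervalIntegral.integral_unitInterval_deriv_eq_sub (f := f)
      (z₁ := b (k + 1) - b k) (hcont k) fun u hu => hf _ (segment_pos hu)
    simpa [smul_eq_mul] using this.symm
  simp only [integral_eq]
  exact hb.completelyMonotone_sub.mul
    (.intervalIntegral zero_le_one (fun u hu => h _ (hb.lineMap_succ hu)) hcont)

lemma log_sub (hb : IsBernstein b) :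
    CompletelyMonotone fun k => Real.log (b (k + 1)) - Real.log (b k) :=
  hb.completelyMonotone_comp_sub (fun _ hx => Real.hasDerivAt_log hx.ne')
    (continuousOn_inv₀.mono fun _ hx => ne_of_gt hx) fun _ hc => hc.inv

lemma rpow_neg (hb : IsBernstein b) {β : ℝ} (hβ : 0 ≤ β) :
    CompletelyMonotone fun k => b k ^ (-β) := by
  simpa only [Real.rpow_def_of_pos (hb.pos _), mul_neg, mul_comm β] using
    CompletelyMonotone.exp_neg (b := fun k => Real.log (b k)) hb.log_sub hβ

lemma rpow (hb : IsBernstein b) {α : ℝ} (hα : α ∈ Icc (0 : ℝ) 1) :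
    IsBernstein fun k => b k ^ α where
  pos k := Real.rpow_pos_of_pos (hb.pos k) α
  completelyMonotone_sub := by
    refine hb.completelyMonotone_comp_sub (f := fun x => x ^ α) (f' := fun x => α * x ^ (-(1 - α)))
      (fun x hx => ?_) ?_ fun c hc => (hc.rpow_neg (sub_nonneg.2 hα.2)).const_mul hα.1
    · simpa using Real.hasDerivAt_rpow_const (p := α) (Or.inl hx.ne')
    · exact continuousOn_const.mul (continuousOn_id.rpow_const fun x hx => Or.inl (ne_of_gt hx))

lemma sqrt (hb : IsBernstein b) : IsBernstein fun k => √(b k) := by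
  simpa only [Real.sqrt_eq_rpow] using hb.rpow (α := 1 / 2) (by norm_num)

lemma exp_neg_mul_sub_div (hb : IsBernstein b) {x y : ℝ} (hx : 0 ≤ x) (hxy : x ≤ y) :
    CompletelyMonotone fun k => (Real.exp (-(x * b k)) - Real.exp (-(y * b k))) / b k := by
  have integral_eq (k : ℕ) : (Real.exp (-(x * b k)) - Real.exp (-(y * b k))) / b k =
      ∫ ξ in x..y, Real.exp (-(ξ * b k)) := by
    have hk := (hb.pos k).ne'
    have hderiv (ξ : ℝ) :
        HasDerivAt (fun ξ => -(Real.exp (-(ξ * b k)) / b k)) (Real.exp (-(ξ * b k))) ξ := by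
      refine (((hasDerivAt_id' ξ).mul_const (b k)).fun_neg.exp.div_const (b k)).fun_neg.congr_deriv
        ?_
      field_simp
    rw [intervalIntegral.integral_eq_sub_of_hasDerivAt (fun ξ _ => hderiv ξ)
      ((by fun_prop : Continuous fun ξ => Real.exp (-(ξ * b k))).intervalIntegrable _ _)]
    ring
  simp only [integral_eq]
  exact .intervalIntegral hxy (fun ξ hξ => hb.exp_neg (hx.trans hξ.1))
    fun k => by fun_prop

end IsBernstein

end CompletelyMonotone

section Laplace

/-- The Laplace transform of a function on the positive half-line, at a real frequency `p`. -/
noncomputable def laplace (f : ℝ → ℝ) (p : ℝ) : ℝ :=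
  ∫ t in Ioi 0, Real.exp (-p * t) * f t

/-- Absolute convergence of the Laplace integral of `f` at all positive frequencies. -/
def LaplaceIntegrable (f : ℝ → ℝ) : Prop :=
  ∀ p > 0, IntegrableOn (fun t => Real.exp (-p * t) * f t) (Ioi 0)

variable {f g : ℝ → ℝ} {p : ℝ}

namespace LaplaceIntegrable

lemma sub (hf : LaplaceIntegrable f) (hg : LaplaceIntegrable g) :
    LaplaceIntegrable fun t => f t - g t :=
  fun p hp => by simp only [mul_sub]; exact (hf p hp).sub (hg p hp)

lemma exp_neg_mul (hf : LaplaceIntegrable f) : LaplaceIntegrable fun t => Real.exp (-t) * f t := by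
  intro p hp
  refine (hf (p + 1) (by positivity)).congr_fun (fun t _ => ?_) measurableSet_Ioi
  simp only [← mul_assoc, ← Real.exp_add]
  ring_nf

lemma one_sub_exp_neg_mul (hf : LaplaceIntegrable f) :
    LaplaceIntegrable fun t => (1 - Real.exp (-t)) * f t := by
  simpa only [sub_mul, one_mul] using hf.sub hf.exp_neg_mul

end LaplaceIntegrable

lemma laplace_sub (hf : LaplaceIntegrable f) (hg : LaplaceIntegrable g) (hp : 0 < p) :
    laplace (fun t => f t - g t) p = laplace f p - laplace g p := by
  simp only [laplace, mul_sub, integral_sub (hf p hp) (hg p hp)]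

lemma laplace_exp_neg_pow_mul (f : ℝ → ℝ) (p : ℝ) (k : ℕ) :
    laplace (fun t => Real.exp (-t) ^ k * f t) p = laplace f (p + k) := by
  refine integral_congr_ae (.of_forall fun t => ?_)
  simp only [← mul_assoc, ← Real.exp_nat_mul, ← Real.exp_add]
  ring_nf

lemma laplace_one_sub_exp_neg_mul (hf : LaplaceIntegrable f) (hp : 0 < p) :
    laplace (fun t => (1 - Real.exp (-t)) * f t) p = laplace f p - laplace f (p + 1) := by
  simpa [sub_mul, laplace_sub hf hf.exp_neg_mul hp] using laplace_exp_neg_pow_mul f p 1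

lemma laplace_one_sub_exp_neg_pow_mul_nonneg (hf : LaplaceIntegrable f) {n : ℕ}
    (h : CompletelyMonotoneUpTo n fun k => laplace f (k + 1)) (k : ℕ) :
    0 ≤ laplace (fun t => (1 - Real.exp (-t)) ^ n * f t) (k + 1) := by
  induction n generalizing f with
  | zero => simpa using h k
  | succ n ih =>
    have diff_eq (k : ℕ) : laplace (fun t => (1 - Real.exp (-t)) * f t) (k + 1) =
        laplace f (k + 1) - laplace f ((k + 1 : ℕ) + 1) := by
      rw [laplace_one_sub_exp_neg_mul hf (by positivity), Nat.cast_succ]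
    simpa only [pow_succ, mul_assoc] using
      ih hf.one_sub_exp_neg_mul (by simpa only [diff_eq] using h.2)

lemma laplace_bernstein_mul_nonneg (hf : LaplaceIntegrable f)
    (h : CompletelyMonotone fun k => laplace f (k + 1)) (n k : ℕ) :
    0 ≤ laplace (fun t => IccExtend zero_le_one (bernstein n k) (Real.exp (-t)) * f t) 1 := by
  have laplace_eq :
      laplace (fun t => IccExtend zero_le_one (bernstein n k) (Real.exp (-t)) * f t) 1 =
      n.choose k * laplace (fun t => (1 - Real.exp (-t)) ^ (n - k) * f t) (k + 1) := by
    rw [add_comm, ← laplace_exp_neg_pow_mul, laplace, laplace, ← integral_const_mul]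
    refine setIntegral_congr_fun measurableSet_Ioi fun t ht => ?_
    have ht : 0 < t := ht
    rw [IccExtend_of_mem _ _ ⟨(Real.exp_pos _).le, Real.exp_le_one_iff.2 (by linarith)⟩,
      bernstein_apply]
    ring
  rw [laplace_eq]
  exact mul_nonneg (Nat.cast_nonneg _) (laplace_one_sub_exp_neg_pow_mul_nonneg hf (h _) k)

lemma laplaceIntegrand_iccExtend_integrableOn (hf : LaplaceIntegrable f) (φ : C(unitInterval, ℝ)) :
    IntegrableOn (fun t => Real.exp (-1 * t) * (IccExtend zero_le_one φ (Real.exp (-t)) * f t))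
      (Ioi 0) := by
  have : Continuous (IccExtend zero_le_one φ) := φ.continuous.Icc_extend'
  simp only [mul_left_comm (Real.exp _)]
  exact (hf 1 one_pos).bdd_mul (c := ‖φ‖) (by fun_prop)
    (.of_forall fun t => φ.norm_coe_le_norm _)

lemma tendsto_laplace_iccExtend_mul (hf : LaplaceIntegrable f) {ι : Type*} {l : Filter ι}
    [l.IsCountablyGenerated] {Φ : ι → C(unitInterval, ℝ)} {φ : C(unitInterval, ℝ)}
    (hΦ : Tendsto Φ l (𝓝 φ)) :
    Tendsto (fun i => laplace (fun t => IccExtend zero_le_one (Φ i) (Real.exp (-t)) * f t) 1) l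
      (𝓝 (laplace (fun t => IccExtend zero_le_one φ (Real.exp (-t)) * f t) 1)) := by
  refine tendsto_integral_filter_of_dominated_convergence
    (fun t => (‖φ‖ + 1) * ‖Real.exp (-1 * t) * f t‖) ?_ ?_ ((hf 1 one_pos).norm.const_mul _) ?_
  · exact .of_forall fun i =>
      (laplaceIntegrand_iccExtend_integrableOn hf (Φ i)).aestronglyMeasurable
  · filter_upwards [hΦ.norm.eventually_lt_const (lt_add_one ‖φ‖)] with i hi
    refine .of_forall fun t => ?_
    rw [mul_left_comm, norm_mul]
    gcongr
    exact ((Φ i).norm_coe_le_norm _).trans hi.le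
  · refine .of_forall fun t => ((Tendsto.mul_const _ ?_).const_mul _)
    exact ((continuous_eval_const (F := C(unitInterval, ℝ)) _).tendsto φ).comp hΦ

lemma laplace_iccExtend_mul_nonneg (hf : LaplaceIntegrable f)
    (h : CompletelyMonotone fun k => laplace f (k + 1)) {φ : C(unitInterval, ℝ)}
    (hφ : ∀ s, 0 ≤ φ s) :
    0 ≤ laplace (fun t => IccExtend zero_le_one φ (Real.exp (-t)) * f t) 1 := by
  refine ge_of_tendsto' (tendsto_laplace_iccExtend_mul hf (bernsteinApproximation_uniform φ))
    fun n => ?_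
  have expand : laplace
      (fun t => IccExtend zero_le_one (bernsteinApproximation n φ) (Real.exp (-t)) * f t) 1 =
      ∑ k : Fin (n + 1), φ (bernstein.z k) *
        laplace (fun t => IccExtend zero_le_one (bernstein n k) (Real.exp (-t)) * f t) 1 := by
    simp only [laplace, ← integral_const_mul]
    rw [← integral_finsetSum _ fun (k : Fin (n + 1)) _ =>
      (laplaceIntegrand_iccExtend_integrableOn hf (bernstein n k)).const_mul _]
    refine integral_congr_ae (.of_forall fun t => ?_)
    simp only [IccExtend, Function.comp_apply, bernsteinApproximation.apply, smul_eq_mul,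
      Finset.sum_mul, Finset.mul_sum]
    exact Finset.sum_congr rfl fun k _ => by ring
  rw [expand]
  exact Finset.sum_nonneg fun k _ => mul_nonneg (hφ _) (laplace_bernstein_mul_nonneg hf h n k)

theorem nonneg_of_completelyMonotone_laplace (hf : LaplaceIntegrable f)
    (h : CompletelyMonotone fun k => laplace f (k + 1)) {t₀ : ℝ} (ht₀ : 0 < t₀)
    (hcont : ContinuousAt f t₀) : 0 ≤ f t₀ := by
  by_contra! hneg
  obtain ⟨r, hr, hball⟩ : ∃ r > 0, ∀ t, |Real.exp (-t) - Real.exp (-t₀)| < r → f t < 0 := by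
    have hlog : ContinuousAt (fun y => f (-Real.log y)) (Real.exp (-t₀)) :=
      ContinuousAt.comp (by simpa using hcont)
        (Real.continuousAt_log (Real.exp_pos _).ne').fun_neg
    obtain ⟨r, hr, hball⟩ := Metric.eventually_nhds_iff.1
      (hlog.eventually_lt_const (by simpa using hneg))
    exact ⟨r, hr, fun t ht => by simpa using hball ht⟩
  let φ : C(unitInterval, ℝ) := ⟨fun s => max 0 (r - |(s : ℝ) - Real.exp (-t₀)|), by fun_prop⟩
  have hφ_apply {t : ℝ} (ht : 0 < t) : IccExtend zero_le_one φ (Real.exp (-t)) =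
      max 0 (r - |Real.exp (-t) - Real.exp (-t₀)|) :=
    IccExtend_of_mem _ _ ⟨(Real.exp_pos _).le, Real.exp_le_one_iff.2 (by linarith)⟩
  have tested := laplace_iccExtend_mul_nonneg hf h (φ := φ) fun s => le_max_left _ _
  refine tested.not_gt ?_
  rw [laplace, ← neg_pos, ← integral_neg, setIntegral_pos_iff_support_of_nonneg_ae _
    (laplaceIntegrand_iccExtend_integrableOn hf φ).fun_neg]
  · let U := Ioi 0 ∩ {t | |Real.exp (-t) - Real.exp (-t₀)| < r}
    have hU : IsOpen U := isOpen_Ioi.inter (isOpen_lt (by fun_prop) continuous_const)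
    refine (hU.measure_pos volume ⟨t₀, ht₀, by simpa using hr⟩).trans_le
      (measure_mono fun t ht => ⟨?_, ht.1⟩)
    simpa [hφ_apply ht.1, (hball t ht.2).ne] using ht.2
  · filter_upwards [ae_restrict_mem measurableSet_Ioi] with t ht
    simp only [hφ_apply ht, Pi.zero_apply]
    rcases lt_or_ge |Real.exp (-t) - Real.exp (-t₀)| r with hlt | hge
    · exact neg_nonneg.2 (mul_nonpos_of_nonneg_of_nonpos (Real.exp_pos _).le
        (mul_nonpos_of_nonneg_of_nonpos (le_max_left _ _) (hball t hlt).le))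
    · simp [max_eq_left (sub_nonpos.2 hge)]

lemma indicator_laplaceIntegrand_delay (f : ℝ → ℝ) (p : ℝ) {d : ℝ} (hd : 0 ≤ d) :
    (Ioi 0).indicator (fun t => Real.exp (-p * t) * (Ioi d).indicator (fun s => f (s - d)) t) =
      fun t => Real.exp (-p * d) *
        (Ioi 0).indicator (fun s => Real.exp (-p * s) * f s) (t - d) := by
  ext t
  rcases lt_or_ge d t with hdt | htd
  · simp only [indicator_of_mem (mem_Ioi.2 (hd.trans_lt hdt)), indicator_of_mem (mem_Ioi.2 hdt),
      indicator_of_mem (mem_Ioi.2 (sub_pos.2 hdt)), ← mul_assoc, ← Real.exp_add]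
    ring_nf
  · simp [indicator, htd.not_gt]

lemma LaplaceIntegrable.delay (hf : LaplaceIntegrable f) {d : ℝ} (hd : 0 ≤ d) :
    LaplaceIntegrable ((Ioi d).indicator fun s => f (s - d)) := by
  intro p hp
  rw [← integrable_indicator_iff measurableSet_Ioi, indicator_laplaceIntegrand_delay f p hd]
  exact (((hf p hp).integrable_indicator measurableSet_Ioi).comp_sub_right d).const_mul _

lemma laplace_delay (f : ℝ → ℝ) (p : ℝ) {d : ℝ} (hd : 0 ≤ d) :
    laplace ((Ioi d).indicator fun s => f (s - d)) p = Real.exp (-p * d) * laplace f p := by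
  rw [laplace, ← integral_indicator measurableSet_Ioi, indicator_laplaceIntegrand_delay f p hd,
    integral_const_mul, integral_sub_right_eq_self _ d, integral_indicator measurableSet_Ioi,
    laplace]

theorem monotoneOn_of_completelyMonotone_laplace (hf : LaplaceIntegrable f)
    (hcont : ContinuousOn f (Ioi 0))
    (h : ∀ d ≥ 0, CompletelyMonotone fun k : ℕ =>
      (1 - Real.exp (-(k + 1) * d)) * laplace f (k + 1)) :
    MonotoneOn f (Ioi 0) := by
  intro s hs t ht hst
  have hd : 0 ≤ t - s := sub_nonneg.2 hst
  have ht_mem : t ∈ Ioi (t - s) := sub_lt_self t hs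
  have delay_cont : ContinuousAt ((Ioi (t - s)).indicator fun u => f (u - (t - s))) t := by
    refine (ContinuousAt.comp (f := fun u => u - (t - s)) ?_ (by fun_prop)).congr
      ((eqOn_indicator.eventuallyEq_of_mem (isOpen_Ioi.mem_nhds ht_mem)).symm)
    simpa using hcont.continuousAt (isOpen_Ioi.mem_nhds hs)
  have key := nonneg_of_completelyMonotone_laplace (hf.sub (hf.delay hd)) ?_ ht
    ((hcont.continuousAt (isOpen_Ioi.mem_nhds ht)).sub delay_cont)
  · simpa [indicator_of_mem ht_mem] using key
  · convert h (t - s) hd using 2 with k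
    rw [laplace_sub hf (hf.delay hd) (by positivity), laplace_delay f _ hd]
    ring

lemma integral_exp_neg_mul_Ioi (hp : 0 < p) (a : ℝ) :
    ∫ t in Ioi a, Real.exp (-p * t) = Real.exp (-p * a) / p := by
  rw [integral_exp_mul_Ioi (neg_neg_of_pos hp) a, neg_div_neg_eq]

lemma integrableOn_exp_neg_mul_Ioi (hp : 0 < p) (a : ℝ) :
    IntegrableOn (fun t => Real.exp (-p * t)) (Ioi a) :=
  integrableOn_exp_mul_Ioi (neg_neg_of_pos hp) a

lemma laplaceIntegrable_const (c : ℝ) : LaplaceIntegrable fun _ => c :=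
  fun _ hp => (integrableOn_exp_neg_mul_Ioi hp 0).mul_const c

lemma laplace_const (c : ℝ) (hp : 0 < p) : laplace (fun _ => c) p = c / p := by
  rw [laplace, integral_mul_const, integral_exp_neg_mul_Ioi hp, mul_zero, Real.exp_zero,
    one_div_mul_eq_div]

lemma laplace_pow (n : ℕ) (hp : 0 < p) :
    laplace (fun t => t ^ n) p = n.factorial / p ^ (n + 1) := by
  have gamma_integral := Real.integral_rpow_mul_exp_neg_mul_Ioi (a := n + 1) (by positivity) hp
  simp only [add_sub_cancel_right, Real.rpow_natCast, Real.Gamma_nat_eq_factorial] at gamma_integral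
  simp only [laplace, neg_mul, mul_comm (Real.exp _), gamma_integral]
  rw [← Nat.cast_succ, Real.rpow_natCast, one_div, inv_pow, inv_mul_eq_div]

lemma laplaceIntegrable_pow (n : ℕ) : LaplaceIntegrable fun t => t ^ n := fun p hp =>
  .of_integral_ne_zero <| by
    change laplace (fun t => t ^ n) p ≠ 0
    rw [laplace_pow n hp]
    positivity

end Laplace

section Tauberian

variable {f L : ℝ → ℝ} {p q T C : ℝ}

lemma le_exp_mul_laplace (hf : LaplaceIntegrable f) (hmono : MonotoneOn f (Ioi 0))
    (hnonneg : ∀ t > 0, 0 ≤ f t) (hp : 0 < p) (hT : 0 < T) :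
    f T ≤ Real.exp (p * T) * (p * laplace f p) := by
  have hsub : Ioi T ⊆ Ioi 0 := Ioi_subset_Ioi hT.le
  have tail_le : Real.exp (-p * T) / p * f T ≤ laplace f p := calc
    Real.exp (-p * T) / p * f T = ∫ t in Ioi T, Real.exp (-p * t) * f T := by
      rw [integral_mul_const, integral_exp_neg_mul_Ioi hp]
    _ ≤ ∫ t in Ioi T, Real.exp (-p * t) * f t := by
      refine setIntegral_mono_on ((integrableOn_exp_neg_mul_Ioi hp T).mul_const _)
        ((hf p hp).mono_set hsub) measurableSet_Ioi fun t ht => ?_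
      gcongr
      exact hmono hT (hsub ht) (le_of_lt ht)
    _ ≤ laplace f p := by
      refine setIntegral_mono_set (hf p hp) ?_ hsub.eventuallyLE
      filter_upwards [ae_restrict_mem measurableSet_Ioi] with t ht
      exact mul_nonneg (Real.exp_pos _).le (hnonneg t ht)
  calc f T = Real.exp (p * T) * (p * (Real.exp (-p * T) / p * f T)) := by
        rw [neg_mul, Real.exp_neg]
        field_simp
    _ ≤ _ := by gcongr

lemma mul_laplace_le_add (hf : LaplaceIntegrable f) (hmono : MonotoneOn f (Ioi 0))
    (hnonneg : ∀ t > 0, 0 ≤ f t) (hq : 0 < q) (hqp : q ≤ p) (hT : 0 < T) :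
    p * laplace f p ≤ f T + p * (Real.exp (-(p - q) * T) * laplace f q) := by
  have hp : 0 < p := hq.trans_le hqp
  have hint := (integrableOn_exp_neg_mul_Ioi hp 0).mul_const (f T)
  have hint' := (hf q hq).const_mul (Real.exp (-(p - q) * T))
  have pointwise {t : ℝ} (ht : 0 < t) : Real.exp (-p * t) * f t ≤
      Real.exp (-p * t) * f T + Real.exp (-(p - q) * T) * (Real.exp (-q * t) * f t) := by
    have := hnonneg t ht
    have := hnonneg T hT
    rcases le_total t T with htT | hTt
    · refine le_add_of_le_of_nonneg ?_ (by positivity)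
      gcongr
      exact hmono ht hT htT
    · refine le_add_of_nonneg_of_le (by positivity) ?_
      rw [← mul_assoc, ← Real.exp_add]
      gcongr
      nlinarith
  have integrated : laplace f p ≤ f T / p + Real.exp (-(p - q) * T) * laplace f q := calc
    laplace f p ≤ ∫ t in Ioi 0, (Real.exp (-p * t) * f T +
        Real.exp (-(p - q) * T) * (Real.exp (-q * t) * f t)) :=
      setIntegral_mono_on (hf p hp) (hint.add hint') measurableSet_Ioi fun t ht => pointwise ht
    _ = f T / p + Real.exp (-(p - q) * T) * laplace f q := by
      rw [integral_add hint hint', integral_mul_const, integral_const_mul,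
        integral_exp_neg_mul_Ioi hp, mul_zero, Real.exp_zero, one_div_mul_eq_div, laplace]
  calc p * laplace f p ≤ p * (f T / p + Real.exp (-(p - q) * T) * laplace f q) := by gcongr
    _ = _ := by rw [mul_add, mul_div_cancel₀ _ hp.ne']

theorem eventually_div_lt_of_tendsto_laplace (hf : LaplaceIntegrable f)
    (hmono : MonotoneOn f (Ioi 0)) (hnonneg : ∀ t > 0, 0 ≤ f t) (hL : ∀ᶠ T in atTop, 0 < L T)
    (hlim : ∀ l > 0, Tendsto (fun T => l / T * laplace f (l / T) / L T) atTop (𝓝 C))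
    {a : ℝ} (ha : C < a) : ∀ᶠ T in atTop, f T / L T < a := by
  have bound_lim : Tendsto (fun l : ℝ => Real.exp l * C) (𝓝[>] 0) (𝓝 C) := by
    have : Continuous fun l : ℝ => Real.exp l * C := by fun_prop
    simpa using (this.tendsto 0).mono_left nhdsWithin_le_nhds
  obtain ⟨l, hla, hl⟩ := ((bound_lim.eventually_lt_const ha).and self_mem_nhdsWithin).exists
  have hl : 0 < l := hl
  filter_upwards [((hlim l hl).const_mul (Real.exp l)).eventually_lt_const hla, hL,
    eventually_gt_atTop 0] with T hlt hLT hT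
  refine lt_of_le_of_lt ?_ hlt
  rw [mul_div_assoc']
  gcongr
  simpa [hT.ne'] using le_exp_mul_laplace hf hmono hnonneg (div_pos hl hT) hT

theorem eventually_lt_div_of_tendsto_laplace (hf : LaplaceIntegrable f)
    (hmono : MonotoneOn f (Ioi 0)) (hnonneg : ∀ t > 0, 0 ≤ f t) (hL : ∀ᶠ T in atTop, 0 < L T)
    (hlim : ∀ l > 0, Tendsto (fun T => l / T * laplace f (l / T) / L T) atTop (𝓝 C))
    {a : ℝ} (ha : a < C) : ∀ᶠ T in atTop, a < f T / L T := by
  have bound_lim : Tendsto (fun l : ℝ => C - l * Real.exp (-(l - 1)) * C) atTop (𝓝 C) := by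
    have := ((Real.tendsto_pow_mul_exp_neg_atTop_nhds_zero 1).mul_const (Real.exp 1)).mul_const C
    simpa [mul_assoc, ← Real.exp_add, neg_add_eq_sub] using this.const_sub C
  obtain ⟨l, hal, hl⟩ := ((bound_lim.eventually_const_lt ha).and (eventually_ge_atTop 1)).exists
  have hl_pos : 0 < l := one_pos.trans_le hl
  have lower_lim :=
    (hlim l hl_pos).sub ((hlim 1 one_pos).const_mul (l * Real.exp (-(l - 1))))
  filter_upwards [lower_lim.eventually_const_lt hal, hL, eventually_gt_atTop 0] with T hlt hLT hT
  refine hlt.trans_le ?_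
  have key := mul_laplace_le_add hf hmono hnonneg (div_pos one_pos hT)
    (div_le_div_of_nonneg_right hl hT.le) hT
  have exponent : -(l / T - 1 / T) * T = -(l - 1) := by field_simp
  rw [exponent] at key
  rw [mul_div_assoc', ← sub_div]
  gcongr
  linear_combination key

/-- Karamata's Tauberian theorem of index `0`, with comparison function `L`. -/
theorem tendsto_div_of_tendsto_laplace (hf : LaplaceIntegrable f) (hmono : MonotoneOn f (Ioi 0))
    (hnonneg : ∀ t > 0, 0 ≤ f t) (hL : ∀ᶠ T in atTop, 0 < L T)
    (hlim : ∀ l > 0, Tendsto (fun T => l / T * laplace f (l / T) / L T) atTop (𝓝 C)) :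
    Tendsto (fun T => f T / L T) atTop (𝓝 C) :=
  tendsto_order.2 ⟨fun _ => eventually_lt_div_of_tendsto_laplace hf hmono hnonneg hL hlim,
    fun _ => eventually_div_lt_of_tendsto_laplace hf hmono hnonneg hL hlim⟩

end Tauberian

section FundamentalSolution

/-- Memory kernels in the Laplace domain, the symbols `κ` of the evolution equations
`pκ(p)·û = ∂²û/∂x²`. Only the values at the positive integers are required to be completely
monotone, which is all that the Hausdorff moment problem sees. -/
structure IsMemoryKernel (κ : ℝ → ℝ) : Prop where
  pos : ∀ p > 0, 0 < κ p
  completelyMonotone : CompletelyMonotone fun k => κ (k + 1)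
  isBernstein_mul : IsBernstein fun k => (k + 1) * κ (k + 1)

/-- The spatial decay rate `√(p κ(p))` at frequency `p`. -/
noncomputable def diffusionExponent (κ : ℝ → ℝ) (p : ℝ) : ℝ :=
  √(p * κ p)

/-- `Z` is a fundamental solution of the diffusion equation with memory kernel `κ`: it is
characterized through its Laplace transform in time. -/
structure IsFundamentalSolution (κ : ℝ → ℝ) (Z : ℝ → ℝ → ℝ) : Prop where
  continuousOn : ∀ x, ContinuousOn (fun t => Z t x) (Ioi 0)
  measurable : Measurable (Function.uncurry Z)
  laplaceIntegrable : ∀ x, LaplaceIntegrable fun t => Z t x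
  laplace_eq : ∀ p > 0, ∀ x, laplace (fun t => Z t x) p =
    1 / 2 * κ p / diffusionExponent κ p * Real.exp (-|x| * diffusionExponent κ p)

/-- The mass that `Z t` leaves outside of the ball of radius `r`, as a defect from `1`. Unlike an
integral over the complement, this is visibly continuous in `t`. -/
noncomputable def tailMass (Z : ℝ → ℝ → ℝ) (r t : ℝ) : ℝ :=
  1 - ∫ x in Metric.closedBall 0 r, Z t x

/-- The law at time `t` of the diffusing particle, with density `Z t`. -/
noncomputable def spatialLaw (Z : ℝ → ℝ → ℝ) (t : ℝ) : Measure ℝ :=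
  volume.withDensity fun x => ENNReal.ofReal (Z t x)

/-- The mean square displacement. -/
noncomputable def secondMoment (Z : ℝ → ℝ → ℝ) (t : ℝ) : ℝ :=
  ∫ x, x ^ 2 * Z t x

lemma integrable_comp_abs {f : ℝ → ℝ} (hf : IntegrableOn f (Ioi 0)) :
    Integrable fun x => f |x| := by
  have hpos := hf.integrable_indicator measurableSet_Ioi
  refine (hpos.add hpos.comp_neg).congr ?_
  filter_upwards [Measure.ae_ne volume (0 : ℝ)] with x hx
  rcases hx.lt_or_gt with hx | hx <;> simp [indicator, hx, hx.not_gt, abs_of_neg, abs_of_pos]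

variable {κ : ℝ → ℝ} {Z : ℝ → ℝ → ℝ} {p r t : ℝ}

namespace IsMemoryKernel

lemma diffusionExponent_pos (hκ : IsMemoryKernel κ) (hp : 0 < p) : 0 < diffusionExponent κ p :=
  Real.sqrt_pos.2 (mul_pos hp (hκ.pos p hp))

lemma diffusionExponent_sq (hκ : IsMemoryKernel κ) (hp : 0 < p) :
    diffusionExponent κ p ^ 2 = p * κ p :=
  Real.sq_sqrt (mul_pos hp (hκ.pos p hp)).le

lemma isBernstein_diffusionExponent (hκ : IsMemoryKernel κ) :
    IsBernstein fun k => diffusionExponent κ (k + 1) :=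
  hκ.isBernstein_mul.sqrt

end IsMemoryKernel

namespace IsFundamentalSolution

lemma nonneg (hκ : IsMemoryKernel κ) (hZ : IsFundamentalSolution κ Z) (ht : 0 < t) (x : ℝ) :
    0 ≤ Z t x := by
  have hσ := hκ.isBernstein_diffusionExponent
  refine nonneg_of_completelyMonotone_laplace (hZ.laplaceIntegrable x) ?_ ht
    ((hZ.continuousOn x).continuousAt (Ioi_mem_nhds ht))
  convert ((hκ.completelyMonotone.const_mul one_half_pos.le).mul hσ.inv).mul
    (hσ.exp_neg (abs_nonneg x)) using 2 with k
  rw [hZ.laplace_eq _ (by positivity), neg_mul, div_eq_mul_inv]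

lemma le_zero_right (hκ : IsMemoryKernel κ) (hZ : IsFundamentalSolution κ Z) (ht : 0 < t) (x : ℝ) :
    Z t x ≤ Z t 0 := by
  rw [← sub_nonneg]
  refine nonneg_of_completelyMonotone_laplace
    ((hZ.laplaceIntegrable 0).sub (hZ.laplaceIntegrable x)) ?_ ht
    (((hZ.continuousOn 0).sub (hZ.continuousOn x)).continuousAt (Ioi_mem_nhds ht))
  convert (hκ.completelyMonotone.const_mul one_half_pos.le).mul
    (hκ.isBernstein_diffusionExponent.exp_neg_mul_sub_div le_rfl (abs_nonneg x)) using 2 with k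
  rw [laplace_sub (hZ.laplaceIntegrable 0) (hZ.laplaceIntegrable x) (by positivity),
    hZ.laplace_eq _ (by positivity), hZ.laplace_eq _ (by positivity), abs_zero, neg_mul]
  ring_nf

section RadialMoments

variable {g : ℝ → ℝ}

lemma laplace_radial_pointwise (hZ : IsFundamentalSolution κ Z) (g : ℝ → ℝ) (hp : 0 < p) (x : ℝ) :
    ∫ t in Ioi 0, g |x| * (Real.exp (-p * t) * Z t x) =
      1 / 2 * κ p / diffusionExponent κ p *
        (Real.exp (-diffusionExponent κ p * |x|) * g |x|) := by
  rw [integral_const_mul, ← laplace, hZ.laplace_eq p hp x]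
  ring_nf

lemma integrable_radial_prod (hκ : IsMemoryKernel κ) (hZ : IsFundamentalSolution κ Z)
    (hg : Measurable g) (hg_int : LaplaceIntegrable g) (hp : 0 < p) :
    Integrable (Function.uncurry fun t x => g |x| * (Real.exp (-p * t) * Z t x))
      ((volume.restrict (Ioi 0)).prod volume) := by
  have hmeas : Measurable (Function.uncurry fun t x => g |x| * (Real.exp (-p * t) * Z t x)) := by
    have : Measurable fun q : ℝ × ℝ => Z q.1 q.2 := hZ.measurable
    unfold Function.uncurry
    fun_prop
  refine (integrable_prod_iff' hmeas.aestronglyMeasurable).2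
    ⟨.of_forall fun x => (hZ.laplaceIntegrable x p hp).const_mul (g |x|), ?_⟩
  refine ((integrable_comp_abs (hg_int _ (hκ.diffusionExponent_pos hp))).const_mul
    (1 / 2 * κ p / diffusionExponent κ p)).norm.congr (.of_forall fun x => ?_)
  dsimp only [Function.uncurry_apply_pair]
  rw [← hZ.laplace_radial_pointwise g hp, integral_const_mul, norm_mul,
    Real.norm_of_nonneg (setIntegral_nonneg measurableSet_Ioi fun t ht =>
      mul_nonneg (Real.exp_pos _).le (hZ.nonneg hκ ht x)), ← integral_const_mul]
  refine setIntegral_congr_fun measurableSet_Ioi fun t ht => ?_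
  rw [norm_mul, Real.norm_of_nonneg (mul_nonneg (Real.exp_pos _).le (hZ.nonneg hκ ht x))]

lemma laplaceIntegrable_radial (hκ : IsMemoryKernel κ) (hZ : IsFundamentalSolution κ Z)
    (hg : Measurable g) (hg_int : LaplaceIntegrable g) :
    LaplaceIntegrable fun t => ∫ x, g |x| * Z t x := by
  intro p hp
  simpa only [IntegrableOn, Function.uncurry_apply_pair, mul_left_comm (g _),
    integral_const_mul] using (hZ.integrable_radial_prod hκ hg hg_int hp).integral_prod_left

lemma ae_integrable_radial (hκ : IsMemoryKernel κ) (hZ : IsFundamentalSolution κ Z)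
    (hg : Measurable g) (hg_int : LaplaceIntegrable g) :
    ∀ᵐ t ∂volume.restrict (Ioi 0), Integrable fun x => g |x| * Z t x := by
  filter_upwards [(hZ.integrable_radial_prod hκ hg hg_int one_pos).prod_right_ae] with t ht
  simpa only [Function.uncurry_apply_pair, mul_left_comm (g _),
    integrable_const_mul_iff (Real.exp_pos _).ne'.isUnit] using ht

theorem laplace_radial (hκ : IsMemoryKernel κ) (hZ : IsFundamentalSolution κ Z)
    (hg : Measurable g) (hg_int : LaplaceIntegrable g) (hp : 0 < p) :
    laplace (fun t => ∫ x, g |x| * Z t x) p =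
      κ p / diffusionExponent κ p * laplace g (diffusionExponent κ p) := calc
  laplace (fun t => ∫ x, g |x| * Z t x) p =
      ∫ t in Ioi 0, ∫ x, g |x| * (Real.exp (-p * t) * Z t x) := by
    simp only [laplace, mul_left_comm (g _), integral_const_mul]
  _ = ∫ x, ∫ t in Ioi 0, g |x| * (Real.exp (-p * t) * Z t x) :=
    integral_integral_swap (hZ.integrable_radial_prod hκ hg hg_int hp)
  _ = 1 / 2 * κ p / diffusionExponent κ p *
      ∫ x, Real.exp (-diffusionExponent κ p * |x|) * g |x| := by
    simp only [hZ.laplace_radial_pointwise g hp, integral_const_mul]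
  _ = κ p / diffusionExponent κ p * laplace g (diffusionExponent κ p) := by
    rw [integral_comp_abs (f := fun y => Real.exp (-diffusionExponent κ p * y) * g y), laplace]
    ring

end RadialMoments

section TailMass

lemma integrableOn_closedBall (hκ : IsMemoryKernel κ) (hZ : IsFundamentalSolution κ Z)
    (ht : 0 < t) (r : ℝ) : IntegrableOn (Z t) (Metric.closedBall 0 r) :=
  Measure.integrableOn_of_bounded measure_closedBall_lt_top.ne
    hZ.measurable.of_uncurry_left.aestronglyMeasurable
    (.of_forall fun x => by
      simpa only [Real.norm_of_nonneg (hZ.nonneg hκ ht x)] using hZ.le_zero_right hκ ht x)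

lemma tailMass_continuousOn (hκ : IsMemoryKernel κ) (hZ : IsFundamentalSolution κ Z) (r : ℝ) :
    ContinuousOn (tailMass Z r) (Ioi 0) := by
  intro t₀ ht₀
  refine (continuousAt_const.sub ?_).continuousWithinAt
  have eventually_le : ∀ᶠ t in 𝓝 t₀, Z t 0 ≤ Z t₀ 0 + 1 :=
    (((hZ.continuousOn 0).continuousAt (Ioi_mem_nhds ht₀)).eventually_lt_const
      (lt_add_one _)).mono fun _ => le_of_lt
  refine continuousAt_of_dominated (bound := fun _ => Z t₀ 0 + 1)
    (.of_forall fun t => hZ.measurable.of_uncurry_left.aestronglyMeasurable) ?_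
    (integrableOn_const measure_closedBall_lt_top.ne)
    (.of_forall fun x => (hZ.continuousOn x).continuousAt (Ioi_mem_nhds ht₀))
  filter_upwards [eventually_le, Ioi_mem_nhds ht₀] with t hle ht
  refine .of_forall fun x => ?_
  rw [Real.norm_of_nonneg (hZ.nonneg hκ ht x)]
  exact (hZ.le_zero_right hκ ht x).trans hle

lemma tailMass_eq (Z : ℝ → ℝ → ℝ) (r t : ℝ) :
    tailMass Z r t = 1 - ∫ x, (1 - (Ioi r).indicator (fun _ => 1) |x|) * Z t x := by
  rw [tailMass, ← integral_indicator Metric.isClosed_closedBall.measurableSet]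
  congr 2 with x
  by_cases hx : |x| ≤ r
  · simp [hx, hx.not_gt]
  · simp [hx, not_le.1 hx]

lemma laplaceIntegrable_tailMass (hκ : IsMemoryKernel κ) (hZ : IsFundamentalSolution κ Z)
    (hr : 0 ≤ r) : LaplaceIntegrable (tailMass Z r) := by
  simp only [funext (tailMass_eq Z r)]
  exact (laplaceIntegrable_const 1).sub <| hZ.laplaceIntegrable_radial hκ
    (measurable_const.sub (measurable_const.indicator measurableSet_Ioi))
    ((laplaceIntegrable_const 1).sub ((laplaceIntegrable_const 1).delay hr))

lemma laplace_tailMass (hκ : IsMemoryKernel κ) (hZ : IsFundamentalSolution κ Z)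
    (hr : 0 ≤ r) (hp : 0 < p) :
    laplace (tailMass Z r) p = Real.exp (-(r * diffusionExponent κ p)) / p := by
  have hσ := hκ.diffusionExponent_pos hp
  have hσ_sq := hκ.diffusionExponent_sq hp
  have hone := laplaceIntegrable_const 1
  have hball : LaplaceIntegrable fun y => 1 - (Ioi r).indicator (fun _ => 1) y :=
    hone.sub (hone.delay hr)
  have hball_meas : Measurable fun y : ℝ => 1 - (Ioi r).indicator (fun _ => (1 : ℝ)) y :=
    measurable_const.sub (measurable_const.indicator measurableSet_Ioi)
  simp only [funext (tailMass_eq Z r)]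
  rw [laplace_sub hone (hZ.laplaceIntegrable_radial hκ hball_meas hball) hp,
    hZ.laplace_radial hκ hball_meas hball hp, laplace_sub hone (hone.delay hr) hσ,
    laplace_delay (fun _ => 1) _ hr, laplace_const 1 hp, laplace_const 1 hσ, neg_mul,
    mul_comm (diffusionExponent κ p) r]
  field_simp
  rw [hσ_sq]
  ring

lemma tailMass_nonneg (hκ : IsMemoryKernel κ) (hZ : IsFundamentalSolution κ Z)
    (hr : 0 ≤ r) (ht : 0 < t) : 0 ≤ tailMass Z r t := by
  refine nonneg_of_completelyMonotone_laplace (hZ.laplaceIntegrable_tailMass hκ hr) ?_ ht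
    ((hZ.tailMass_continuousOn hκ r).continuousAt (Ioi_mem_nhds ht))
  convert (hκ.isBernstein_diffusionExponent.exp_neg hr).mul isBernstein_natCast_add_one.inv
    using 2 with k
  rw [hZ.laplace_tailMass hκ hr (by positivity), div_eq_mul_inv]

lemma tailMass_monotoneOn (hκ : IsMemoryKernel κ) (hZ : IsFundamentalSolution κ Z)
    (hr : 0 ≤ r) : MonotoneOn (tailMass Z r) (Ioi 0) := by
  refine monotoneOn_of_completelyMonotone_laplace (hZ.laplaceIntegrable_tailMass hκ hr)
    (hZ.tailMass_continuousOn hκ r) fun d hd => ?_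
  convert (isBernstein_natCast_add_one.exp_neg_mul_sub_div le_rfl hd).mul
    (hκ.isBernstein_diffusionExponent.exp_neg hr) using 2 with k
  rw [hZ.laplace_tailMass hκ hr (by positivity), zero_mul, neg_zero, Real.exp_zero, neg_mul,
    mul_comm d]
  ring

lemma tendsto_tailMass_atTop (hκ : IsMemoryKernel κ) (hZ : IsFundamentalSolution κ Z)
    (ht : 0 < t) : Tendsto (fun r => tailMass Z r t) atTop (𝓝 0) := by
  have chernoff : ∀ᶠ r in atTop,
      tailMass Z r t ≤ Real.exp t * Real.exp (-(r * diffusionExponent κ 1)) := by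
    filter_upwards [eventually_ge_atTop 0] with r hr
    simpa [hZ.laplace_tailMass hκ hr one_pos] using
      le_exp_mul_laplace (hZ.laplaceIntegrable_tailMass hκ hr) (hZ.tailMass_monotoneOn hκ hr)
        (fun _ => hZ.tailMass_nonneg hκ hr) one_pos ht
  have bound_tendsto :
      Tendsto (fun r => Real.exp t * Real.exp (-(r * diffusionExponent κ 1))) atTop (𝓝 0) := by
    simpa using (Real.tendsto_exp_neg_atTop_nhds_zero.comp
      (tendsto_id.atTop_mul_const (hκ.diffusionExponent_pos one_pos))).const_mul (Real.exp t)
  refine squeeze_zero' ?_ chernoff bound_tendsto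
  filter_upwards [eventually_ge_atTop 0] with r hr using hZ.tailMass_nonneg hκ hr ht

end TailMass

section SpatialLaw

lemma spatialLaw_closedBall (hκ : IsMemoryKernel κ) (hZ : IsFundamentalSolution κ Z)
    (ht : 0 < t) (r : ℝ) :
    spatialLaw Z t (Metric.closedBall 0 r) = ENNReal.ofReal (1 - tailMass Z r t) := by
  rw [spatialLaw, withDensity_apply _ Metric.isClosed_closedBall.measurableSet, tailMass,
    sub_sub_cancel, ofReal_integral_eq_lintegral_ofReal (hZ.integrableOn_closedBall hκ ht r)
      (.of_forall (hZ.nonneg hκ ht))]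

lemma isProbabilityMeasure_spatialLaw (hκ : IsMemoryKernel κ) (hZ : IsFundamentalSolution κ Z)
    (ht : 0 < t) : IsProbabilityMeasure (spatialLaw Z t) where
  measure_univ := by
    have exhaustion := tendsto_measure_iUnion_atTop (μ := spatialLaw Z t)
      fun m n (h : m ≤ n) => Metric.closedBall_subset_closedBall (x := (0 : ℝ)) (Nat.cast_le.2 h)
    rw [Metric.iUnion_closedBall_nat] at exhaustion
    refine tendsto_nhds_unique exhaustion ?_
    simpa [Function.comp_def, hZ.spatialLaw_closedBall hκ ht] using ENNReal.tendsto_ofReal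
      (((hZ.tendsto_tailMass_atTop hκ ht).comp tendsto_natCast_atTop_atTop).const_sub 1)

lemma spatialLaw_compl_closedBall (hκ : IsMemoryKernel κ) (hZ : IsFundamentalSolution κ Z)
    (ht : 0 < t) (hr : 0 ≤ r) :
    spatialLaw Z t (Metric.closedBall 0 r)ᶜ = ENNReal.ofReal (tailMass Z r t) := by
  have := hZ.isProbabilityMeasure_spatialLaw hκ ht
  rw [prob_compl_eq_one_sub Metric.isClosed_closedBall.measurableSet,
    hZ.spatialLaw_closedBall hκ ht, ENNReal.ofReal_sub _ (hZ.tailMass_nonneg hκ hr ht),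
    ENNReal.ofReal_one]
  have tailMass_le_one : ENNReal.ofReal (tailMass Z r t) ≤ 1 := by
    rw [ENNReal.ofReal_le_one, tailMass, sub_le_self_iff]
    exact integral_nonneg (hZ.nonneg hκ ht)
  exact ENNReal.sub_sub_cancel ENNReal.one_ne_top tailMass_le_one

lemma lintegral_sq_spatialLaw (hκ : IsMemoryKernel κ) (hZ : IsFundamentalSolution κ Z)
    (ht : 0 < t) : ∫⁻ x, ENNReal.ofReal (x ^ 2) ∂spatialLaw Z t =
      ∫⁻ y in Ioi 0, ENNReal.ofReal (tailMass Z √y t) := by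
  rw [lintegral_eq_lintegral_meas_lt _ (.of_forall sq_nonneg) (by fun_prop)]
  refine setLIntegral_congr_fun measurableSet_Ioi fun y (hy : 0 < y) => ?_
  rw [← hZ.spatialLaw_compl_closedBall hκ ht (Real.sqrt_nonneg y)]
  congr 1
  ext x
  simp [Real.sqrt_lt_sqrt_iff hy.le, ← Real.sqrt_sq_eq_abs]

lemma lintegral_sq_spatialLaw_monotoneOn (hκ : IsMemoryKernel κ)
    (hZ : IsFundamentalSolution κ Z) :
    MonotoneOn (fun t => ∫⁻ x, ENNReal.ofReal (x ^ 2) ∂spatialLaw Z t) (Ioi 0) := by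
  intro s hs t ht hst
  simp only [hZ.lintegral_sq_spatialLaw hκ hs, hZ.lintegral_sq_spatialLaw hκ ht]
  exact lintegral_mono fun y =>
    ENNReal.ofReal_le_ofReal (hZ.tailMass_monotoneOn hκ (Real.sqrt_nonneg y) hs ht hst)

lemma lintegral_sq_mul (hκ : IsMemoryKernel κ) (hZ : IsFundamentalSolution κ Z)
    (ht : 0 < t) : ∫⁻ x, ENNReal.ofReal (x ^ 2 * Z t x) =
      ∫⁻ x, ENNReal.ofReal (x ^ 2) ∂spatialLaw Z t := by
  rw [spatialLaw, lintegral_withDensity_eq_lintegral_mul _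
    hZ.measurable.of_uncurry_left.ennreal_ofReal (by fun_prop)]
  simp only [Pi.mul_apply, ← ENNReal.ofReal_mul (hZ.nonneg hκ ht _), mul_comm]

end SpatialLaw

section SecondMoment

lemma sq_mul_nonneg (hκ : IsMemoryKernel κ) (hZ : IsFundamentalSolution κ Z) (ht : 0 < t)
    (x : ℝ) : 0 ≤ x ^ 2 * Z t x :=
  mul_nonneg (sq_nonneg x) (hZ.nonneg hκ ht x)

lemma integrable_sq_mul_iff (hκ : IsMemoryKernel κ) (hZ : IsFundamentalSolution κ Z)
    (ht : 0 < t) : Integrable (fun x => x ^ 2 * Z t x) ↔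
      ∫⁻ x, ENNReal.ofReal (x ^ 2) ∂spatialLaw Z t < ⊤ := by
  have hmeas : Measurable (Z t) := hZ.measurable.of_uncurry_left
  rw [← hZ.lintegral_sq_mul hκ ht, Integrable,
    hasFiniteIntegral_iff_ofReal (.of_forall (hZ.sq_mul_nonneg hκ ht))]
  exact and_iff_right (by fun_prop)

theorem integrable_sq_mul (hκ : IsMemoryKernel κ) (hZ : IsFundamentalSolution κ Z)
    (ht : 0 < t) : Integrable fun x => x ^ 2 * Z t x := by
  have ae_integrable := hZ.ae_integrable_radial hκ (by fun_prop) (laplaceIntegrable_pow 2)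
  obtain ⟨s, hts, hs⟩ : ∃ s ∈ Ioi t, Integrable fun x => |x| ^ 2 * Z s x := by
    have ae_after := ae_restrict_of_ae_restrict_of_subset (Ioi_subset_Ioi ht.le) ae_integrable
    have : (ae (volume.restrict (Ioi t))).NeBot :=
      ae_restrict_neBot.2 (by simp)
    exact ((ae_restrict_mem measurableSet_Ioi).and ae_after).exists
  simp only [sq_abs] at hs
  have hs_pos : 0 < s := ht.trans hts
  rw [hZ.integrable_sq_mul_iff hκ ht]
  exact (hZ.lintegral_sq_spatialLaw_monotoneOn hκ ht hs_pos hts.le).trans_lt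
    ((hZ.integrable_sq_mul_iff hκ hs_pos).1 hs)

lemma ofReal_secondMoment (hκ : IsMemoryKernel κ) (hZ : IsFundamentalSolution κ Z)
    (ht : 0 < t) : ENNReal.ofReal (secondMoment Z t) =
      ∫⁻ x, ENNReal.ofReal (x ^ 2) ∂spatialLaw Z t := by
  rw [secondMoment, ofReal_integral_eq_lintegral_ofReal (hZ.integrable_sq_mul hκ ht)
    (.of_forall (hZ.sq_mul_nonneg hκ ht)), hZ.lintegral_sq_mul hκ ht]

lemma secondMoment_nonneg (hκ : IsMemoryKernel κ) (hZ : IsFundamentalSolution κ Z)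
    (ht : 0 < t) : 0 ≤ secondMoment Z t :=
  integral_nonneg (hZ.sq_mul_nonneg hκ ht)

lemma secondMoment_monotoneOn (hκ : IsMemoryKernel κ) (hZ : IsFundamentalSolution κ Z) :
    MonotoneOn (secondMoment Z) (Ioi 0) := by
  intro s hs t ht hst
  rw [← ENNReal.ofReal_le_ofReal_iff (hZ.secondMoment_nonneg hκ ht),
    hZ.ofReal_secondMoment hκ hs, hZ.ofReal_secondMoment hκ ht]
  exact hZ.lintegral_sq_spatialLaw_monotoneOn hκ hs ht hst

lemma secondMoment_eq (Z : ℝ → ℝ → ℝ) :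
    secondMoment Z = fun t => ∫ x, |x| ^ 2 * Z t x := by
  simp only [sq_abs]
  rfl

lemma laplaceIntegrable_secondMoment (hκ : IsMemoryKernel κ) (hZ : IsFundamentalSolution κ Z) :
    LaplaceIntegrable (secondMoment Z) := by
  rw [secondMoment_eq]
  exact hZ.laplaceIntegrable_radial hκ (by fun_prop) (laplaceIntegrable_pow 2)

lemma laplace_secondMoment (hκ : IsMemoryKernel κ) (hZ : IsFundamentalSolution κ Z)
    (hp : 0 < p) : laplace (secondMoment Z) p = 2 / (p * (p * κ p)) := by
  have hσ := hκ.diffusionExponent_pos hp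
  have hκp := hκ.pos p hp
  rw [secondMoment_eq, hZ.laplace_radial hκ (by fun_prop) (laplaceIntegrable_pow 2) hp,
    laplace_pow 2 hσ, Nat.factorial_two, Nat.cast_two, div_mul_div_comm, ← pow_succ',
    pow_mul (diffusionExponent κ p) 2 2, hκ.diffusionExponent_sq hp]
  field_simp

theorem tendsto_secondMoment_div (hκ : IsMemoryKernel κ) (hZ : IsFundamentalSolution κ Z)
    {L : ℝ → ℝ} {c : ℝ} (hL : ∀ᶠ T in atTop, 0 < L T) (hc : c ≠ 0)
    (hlim : ∀ l > 0, Tendsto (fun T => l / T * κ (l / T) * L T) atTop (𝓝 c)) :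
    Tendsto (fun t => secondMoment Z t / L t) atTop (𝓝 (2 / c)) := by
  refine tendsto_div_of_tendsto_laplace (hZ.laplaceIntegrable_secondMoment hκ)
    (hZ.secondMoment_monotoneOn hκ) (fun _ => hZ.secondMoment_nonneg hκ) hL fun l hl => ?_
  refine ((tendsto_const_nhds (x := (2 : ℝ))).div (hlim l hl) hc).congr' ?_
  filter_upwards [eventually_gt_atTop 0] with T hT
  have hp : 0 < l / T := div_pos hl hT
  rw [hZ.laplace_secondMoment hκ hp, Pi.div_apply]
  field_simp

end SecondMoment

end IsFundamentalSolution

end FundamentalSolution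

section DistributedOrderKernel

variable {μ : ℝ → ℝ} {p : ℝ}

lemma mul_Kreal (μ : ℝ → ℝ) (hp : 0 < p) : p * Kreal μ p = ∫ α in (0 : ℝ)..1, p ^ α * μ α := by
  simp only [Kreal, ← intervalIntegral.integral_const_mul, Real.rpow_sub_one hp.ne', ← mul_assoc,
    mul_div_cancel₀ _ hp.ne']

lemma continuousOn_rpow_mul (hμ : ContinuousOn μ (Icc 0 1)) (hp : 0 < p) :
    ContinuousOn (fun α => p ^ α * μ α) (Icc 0 1) :=
  (Real.continuous_const_rpow hp.ne').continuousOn.mul hμ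

lemma continuousOn_rpow_sub_one_mul (hμ : ContinuousOn μ (Icc 0 1)) (hp : 0 < p) :
    ContinuousOn (fun α => p ^ (α - 1) * μ α) (Icc 0 1) :=
  ((Real.continuous_const_rpow hp.ne').comp (continuous_sub_right 1)).continuousOn.mul hμ

lemma Kreal_pos (hμ : ContinuousOn μ (Icc 0 1)) (hμ_nonneg : ∀ α ∈ Icc 0 1, 0 ≤ μ α)
    (hμ0 : 0 < μ 0) (hp : 0 < p) : 0 < Kreal μ p :=
  intervalIntegral.integral_pos one_pos (continuousOn_rpow_sub_one_mul hμ hp)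
    (fun α hα => mul_nonneg (Real.rpow_pos_of_pos hp _).le (hμ_nonneg α (Ioc_subset_Icc_self hα)))
    ⟨0, left_mem_Icc.2 zero_le_one, mul_pos (Real.rpow_pos_of_pos hp _) hμ0⟩

lemma completelyMonotone_Kreal (hμ : ContinuousOn μ (Icc 0 1))
    (hμ_nonneg : ∀ α ∈ Icc 0 1, 0 ≤ μ α) : CompletelyMonotone fun k => Kreal μ (k + 1) := by
  refine .intervalIntegral zero_le_one (fun α hα => ?_) fun k =>
    continuousOn_rpow_sub_one_mul hμ (by positivity)
  simpa only [neg_sub, mul_comm (μ α)] using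
    (isBernstein_natCast_add_one.rpow_neg (sub_nonneg.2 hα.2)).const_mul (hμ_nonneg α hα)

lemma completelyMonotone_mul_Kreal_sub (hμ : ContinuousOn μ (Icc 0 1))
    (hμ_nonneg : ∀ α ∈ Icc 0 1, 0 ≤ μ α) : CompletelyMonotone fun k : ℕ =>
      ((k + 1 : ℕ) + 1) * Kreal μ ((k + 1 : ℕ) + 1) - (k + 1) * Kreal μ (k + 1) := by
  have hcont (k : ℕ) : ContinuousOn (fun α => ((k : ℝ) + 1) ^ α * μ α) (Icc 0 1) :=
    continuousOn_rpow_mul hμ (by positivity)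
  have hint (k : ℕ) := (hcont k).intervalIntegrable_of_Icc (μ := volume) zero_le_one
  simp only [mul_Kreal μ (Nat.cast_add_one_pos _),
    ← intervalIntegral.integral_sub (hint _) (hint _)]
  refine .intervalIntegral zero_le_one (fun α hα => ?_) fun k => (hcont (k + 1)).sub (hcont k)
  simpa only [← sub_mul, mul_comm (μ α)] using
    (isBernstein_natCast_add_one.rpow hα).completelyMonotone_sub.const_mul (hμ_nonneg α hα)

theorem isMemoryKernel_Kreal (hμ : ContinuousOn μ (Icc 0 1))
    (hμ_nonneg : ∀ α ∈ Icc 0 1, 0 ≤ μ α) (hμ0 : 0 < μ 0) : IsMemoryKernel (Kreal μ) where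
  pos _ hp := Kreal_pos hμ hμ_nonneg hμ0 hp
  completelyMonotone := completelyMonotone_Kreal hμ hμ_nonneg
  isBernstein_mul := {
    pos := fun k => mul_pos k.cast_add_one_pos (Kreal_pos hμ hμ_nonneg hμ0 k.cast_add_one_pos)
    completelyMonotone_sub := completelyMonotone_mul_Kreal_sub hμ hμ_nonneg }

lemma integral_rpow_mul_neg_log (hp : 0 < p) :
    ∫ α in (0 : ℝ)..1, p ^ α * -Real.log p = 1 - p := by
  have hderiv (α : ℝ) : HasDerivAt (fun α => -p ^ α) (p ^ α * -Real.log p) α := by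
    simpa using (Real.hasStrictDerivAt_const_rpow hp α).hasDerivAt.fun_neg
  have hcont : Continuous fun α : ℝ => p ^ α * -Real.log p :=
    (Real.continuous_const_rpow hp.ne').mul_const _
  rw [intervalIntegral.integral_eq_sub_of_hasDerivAt (fun α _ => hderiv α)
    (hcont.intervalIntegrable 0 1), Real.rpow_one, Real.rpow_zero, sub_neg_eq_add, neg_add_eq_sub]

lemma tendstoUniformlyOn_rpow_mul_neg_log {δ : ℝ} (hδ : 0 < δ) :
    TendstoUniformlyOn (fun p α : ℝ => p ^ α * -Real.log p) 0 (𝓝[>] 0) (Ici δ) := by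
  have hlim : Tendsto (fun p : ℝ => p ^ δ * -Real.log p) (𝓝[>] 0) (𝓝 0) := by
    simpa [mul_comm] using (tendsto_log_mul_rpow_nhdsGT_zero hδ).neg
  refine Metric.tendstoUniformlyOn_iff.2 fun ε hε => ?_
  filter_upwards [hlim.eventually_lt_const hε, Ioo_mem_nhdsGT one_pos] with p hlt hp α hα
  have hlog : 0 ≤ -Real.log p := neg_nonneg.2 (Real.log_nonpos hp.1.le hp.2.le)
  rw [Pi.zero_apply, dist_zero_left,
    Real.norm_of_nonneg (mul_nonneg (Real.rpow_pos_of_pos hp.1 α).le hlog)]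
  refine (mul_le_mul_of_nonneg_right ?_ hlog).trans_lt hlt
  exact Real.rpow_le_rpow_of_exponent_ge hp.1 hp.2.le hα

theorem tendsto_integral_rpow_mul_neg_log (hμ : ContinuousOn μ (Icc 0 1)) :
    Tendsto (fun p : ℝ => ∫ α in Icc (0 : ℝ) 1, (p ^ α * -Real.log p) • μ α) (𝓝[>] 0)
      (𝓝 (μ 0)) := by
  have zero_mem : (0 : ℝ) ∈ Icc 0 1 := left_mem_Icc.2 zero_le_one
  refine tendsto_setIntegral_peak_smul_of_integrableOn_of_tendsto measurableSet_Icc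
    measurableSet_Icc subset_rfl self_mem_nhdsWithin measure_Icc_lt_top.ne ?_ ?_ ?_ ?_
    hμ.integrableOn_Icc (hμ 0 zero_mem)
  · filter_upwards [Ioo_mem_nhdsGT one_pos] with p hp α _
    exact mul_nonneg (Real.rpow_pos_of_pos hp.1 α).le
      (neg_nonneg.2 (Real.log_nonpos hp.1.le hp.2.le))
  · intro u hu h0u
    obtain ⟨δ, hδ, hball⟩ := Metric.isOpen_iff.1 hu 0 h0u
    refine (tendstoUniformlyOn_rpow_mul_neg_log hδ).mono fun α hα => mem_Ici.2 ?_
    by_contra! hlt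
    exact hα.2 (hball (by simpa [abs_of_nonneg hα.1.1] using hlt))
  · have one_sub_tendsto : Tendsto (fun p : ℝ => 1 - p) (𝓝[>] 0) (𝓝 1) :=
      tendsto_nhdsWithin_of_tendsto_nhds (Continuous.tendsto' (by fun_prop) _ _ (sub_zero 1))
    refine one_sub_tendsto.congr' ?_
    filter_upwards [self_mem_nhdsWithin] with p hp
    rw [integral_Icc_eq_integral_Ioc, ← intervalIntegral.integral_of_le zero_le_one,
      integral_rpow_mul_neg_log hp]
  · filter_upwards [self_mem_nhdsWithin] with p hp
    exact ((Real.continuous_const_rpow (ne_of_gt hp)).mul_const _).aestronglyMeasurable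

lemma tendsto_mul_Kreal_mul_neg_log (hμ : ContinuousOn μ (Icc 0 1)) :
    Tendsto (fun p => p * Kreal μ p * -Real.log p) (𝓝[>] 0) (𝓝 (μ 0)) := by
  refine (tendsto_integral_rpow_mul_neg_log hμ).congr' ?_
  filter_upwards [self_mem_nhdsWithin] with p hp
  rw [mul_Kreal μ hp, ← intervalIntegral.integral_mul_const,
    intervalIntegral.integral_of_le zero_le_one, integral_Icc_eq_integral_Ioc]
  simp only [smul_eq_mul, mul_right_comm]

lemma tendsto_log_div_neg_log_const_div {l : ℝ} (hl : 0 < l) :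
    Tendsto (fun T => Real.log T / -Real.log (l / T)) atTop (𝓝 1) := by
  have hlim : Tendsto (fun T => (1 - Real.log l / Real.log T)⁻¹) atTop (𝓝 1) := by
    simpa using ((Real.tendsto_log_atTop.const_div_atTop (Real.log l)).const_sub 1).inv₀
      (by norm_num)
  refine hlim.congr' ?_
  filter_upwards [eventually_gt_atTop 1] with T hT
  rw [Real.log_div hl.ne' (by positivity), neg_sub, one_sub_div (Real.log_pos hT).ne', inv_div]

theorem tendsto_mul_Kreal_mul_log (hμ : ContinuousOn μ (Icc 0 1)) {l : ℝ} (hl : 0 < l) :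
    Tendsto (fun T => l / T * Kreal μ (l / T) * Real.log T) atTop (𝓝 (μ 0)) := by
  have scale_tendsto : Tendsto (fun T => l / T) atTop (𝓝[>] 0) :=
    tendsto_nhdsWithin_iff.2 ⟨tendsto_id.const_div_atTop l,
      (eventually_gt_atTop 0).mono fun T hT => div_pos hl hT⟩
  have hprod := ((tendsto_mul_Kreal_mul_neg_log hμ).comp scale_tendsto).mul
    (tendsto_log_div_neg_log_const_div hl)
  rw [mul_one] at hprod
  refine hprod.congr' ?_
  filter_upwards [eventually_gt_atTop l] with T hT
  have hlog : -Real.log (l / T) ≠ 0 :=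
    (neg_pos.2 (Real.log_neg (by have := hl.trans hT; positivity)
      ((div_lt_one (hl.trans hT)).2 hT))).ne'
  rw [Function.comp_apply, mul_assoc _ _ (_ / _), mul_div_cancel₀ _ hlog]

end DistributedOrderKernel

theorem mean_square_displacement_log_growth_general (μ : ℝ → ℝ) (hμ : ContinuousOn μ (Icc 0 1))
    (hμ_nonneg : ∀ α ∈ Icc 0 1, 0 ≤ μ α) (hμ0 : 0 < μ 0) (Z : ℝ → ℝ → ℝ)
    (hZc : ∀ x, ContinuousOn (fun t => Z t x) (Ioi 0)) (hZmeas : Measurable (Function.uncurry Z))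
    (hZlap : ∀ p > 0, ∀ x, IntegrableOn (fun t => Real.exp (-p * t) * Z t x) (Ioi 0) ∧
      ∫ t in Ioi 0, Real.exp (-p * t) * Z t x =
        1 / 2 * Kreal μ p / √(p * Kreal μ p) * Real.exp (-|x| * √(p * Kreal μ p))) :
    (∀ t > 0, Integrable fun x => x ^ 2 * Z t x) ∧
      Tendsto (fun t => (∫ x, x ^ 2 * Z t x) / Real.log t) atTop (𝓝 (2 / μ 0)) := by
  have hκ : IsMemoryKernel (Kreal μ) := isMemoryKernel_Kreal hμ hμ_nonneg hμ0
  have hZ : IsFundamentalSolution (Kreal μ) Z :=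
    ⟨hZc, hZmeas, fun x p hp => (hZlap p hp x).1, fun p hp x => (hZlap p hp x).2⟩
  exact ⟨fun _ => hZ.integrable_sq_mul hκ,
    hZ.tendsto_secondMoment_div hκ (Real.tendsto_log_atTop.eventually_gt_atTop 0) hμ0.ne'
      fun _ => tendsto_mul_Kreal_mul_log hμ⟩

theorem mean_square_displacement_log_growth (μ : ℝ → ℝ) (ρ : ℝ)
    (hC2 : ContDiffOn ℝ 2 μ (Set.Icc 0 1))
    (hρ : 0 < ρ) (hμlow : ∀ α ∈ Set.Icc (0:ℝ) 1, ρ ≤ μ α)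
    (Z : ℝ → ℝ → ℝ)
    (hZc : ∀ x : ℝ, ContinuousOn (fun t => Z t x) (Set.Ioi 0))
    (hZmeas : Measurable (Function.uncurry Z))
    (hZint : ∀ t > (0:ℝ), Integrable (fun x : ℝ => x ^ 2 * Z t x))
    (hZlap : ∀ p : ℝ, 0 < p → ∀ x : ℝ,
      IntegrableOn (fun t : ℝ => Real.exp (-p * t) * Z t x) (Set.Ioi 0) ∧
      ∫ t in Set.Ioi (0:ℝ), Real.exp (-p * t) * Z t x
        = (1 / 2) * Kreal μ p / Real.sqrt (p * Kreal μ p)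
            * Real.exp (-|x| * Real.sqrt (p * Kreal μ p))) :
    ∃ C > (0:ℝ),
      Tendsto (fun t : ℝ => (∫ x : ℝ, x ^ 2 * Z t x) / Real.log t) atTop
        (nhds C) := by
  have hμ0 : 0 < μ 0 := hρ.trans_le (hμlow 0 (left_mem_Icc.2 zero_le_one))
  exact ⟨2 / μ 0, by positivity, (mean_square_displacement_log_growth_general μ hC2.continuousOn
    (fun α hα => hρ.le.trans (hμlow α hα)) hμ0 Z hZc hZmeas hZlap).2⟩
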